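/- arXiv:quant-ph/0010040 — 6 statements merged into one kernel-verified Lean document; each statement's English description precedes it below -/
import Mathlib

section
/- Let E be an inner product space over ℂ, let x₀ ∈ E be a unit vector, let β ∈ (0, π/2) be a real number, and let ψ₀ ∈ E be a unit vector with ⟪x₀, ψ₀⟫ = sin β (a real number). Set x₀⊥ = (1/cos β) • (ψ₀ - (sin β) • x₀), so that ψ₀ = (sin β) • x₀ + (cos β) • x₀⊥, and define Q : E → E by Q = -(I_{ψ₀} ∘ I_{x₀}). Then for every natural number k, Q^k ψ₀ = sin((2k+1)β) • x₀ + cos((2k+1)β) • x₀⊥. (That is, Q acts on the real plane spanned by x₀ and x₀⊥ as rotation by the angle 2β toward x₀.) -/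
open scoped ComplexInnerProductSpace

/-- Inversion about the hyperplane orthogonal to `ψ`: `I_ψ x = x - 2⟪ψ, x⟫ • ψ`. -/
noncomputable def inversion {E : Type*} [NormedAddCommGroup E] [InnerProductSpace ℂ E]
    (ψ : E) (x : E) : E :=
  x - ((2 : ℂ) * ⟪ψ, x⟫) • ψ

theorem grover_iterate_rotation {E : Type*} [NormedAddCommGroup E] [InnerProductSpace ℂ E]
    (x₀ ψ₀ x₀perp : E) (β : ℝ)
    (hx₀ : ‖x₀‖ = 1) (hψ₀ : ‖ψ₀‖ = 1)
    (hβ : β ∈ Set.Ioo 0 (Real.pi / 2))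
    (hinner : ⟪x₀, ψ₀⟫ = (Real.sin β : ℂ))
    (hx₀perp : x₀perp = ((1 / Real.cos β : ℝ) : ℂ) • (ψ₀ - ((Real.sin β : ℝ) : ℂ) • x₀))
    (Q : E → E) (hQ : ∀ v, Q v = -(inversion ψ₀ (inversion x₀ v))) :
    ∀ k : ℕ, Q^[k] ψ₀ =
      ((Real.sin ((2 * k + 1) * β) : ℝ) : ℂ) • x₀ +
      ((Real.cos ((2 * k + 1) * β) : ℝ) : ℂ) • x₀perp := by
  have hc : Real.cos β ≠ 0 :=
    (Real.cos_pos_of_mem_Ioo ⟨by linarith [hβ.1, Real.pi_pos], hβ.2⟩).ne'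
  have hcs : (Real.sin β : ℂ) ^ 2 + (Real.cos β : ℂ) ^ 2 = 1 := by
    exact_mod_cast Real.sin_sq_add_cos_sq β
  have hcC : (Real.cos β : ℂ) ≠ 0 := by exact_mod_cast hc
  have hxx : ⟪x₀, x₀⟫ = (1 : ℂ) := by
    rw [inner_self_eq_norm_sq_to_K, hx₀]; norm_num
  have hpp : ⟪ψ₀, ψ₀⟫ = (1 : ℂ) := by
    rw [inner_self_eq_norm_sq_to_K, hψ₀]; norm_num
  have hpx : ⟪ψ₀, x₀⟫ = (Real.sin β : ℂ) := by
    rw [← inner_conj_symm, hinner, Complex.conj_ofReal]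
  have hxp : ⟪x₀, x₀perp⟫ = (0 : ℂ) := by
    rw [hx₀perp, inner_smul_right, inner_sub_right, inner_smul_right, hxx, hinner]
    ring
  have hpp' : ⟪ψ₀, x₀perp⟫ = (Real.cos β : ℂ) := by
    rw [hx₀perp, inner_smul_right, inner_sub_right, inner_smul_right, hpp, hpx,
      Complex.ofReal_div, Complex.ofReal_one]
    field_simp
    linear_combination -hcs
  have hψ : ψ₀ = (Real.sin β : ℂ) • x₀ + (Real.cos β : ℂ) • x₀perp := by
    rw [hx₀perp, smul_smul, Complex.ofReal_div, Complex.ofReal_one, mul_one_div_cancel hcC,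
      one_smul]
    abel
  have key : ∀ a b : ℂ, Q (a • x₀ + b • x₀perp) =
      (a * (1 - 2 * (Real.sin β : ℂ) ^ 2) + b * (2 * Real.sin β * Real.cos β)) • x₀ +
      (b * (2 * (Real.cos β : ℂ) ^ 2 - 1) - a * (2 * Real.sin β * Real.cos β)) • x₀perp := by
    intro a b
    have h1 : inversion x₀ (a • x₀ + b • x₀perp) = (-a) • x₀ + b • x₀perp := by
      unfold inversion
      rw [inner_add_right, inner_smul_right, inner_smul_right, hxx, hxp]
      module
    rw [hQ, h1]
    unfold inversion
    rw [inner_add_right, inner_smul_right, inner_smul_right, hpx, hpp']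
    generalize (Real.sin β : ℂ) = s at *
    generalize (Real.cos β : ℂ) = c at *
    rw [hψ]
    module
  intro k
  induction k with
  | zero => simpa using hψ
  | succ k ih =>
    rw [Function.iterate_succ_apply', ih, key]
    have e : (2 * ((k + 1 : ℕ) : ℝ) + 1) * β = (2 * k + 1) * β + 2 * β := by
      push_cast; ring
    have hs2 := Real.sin_sq_add_cos_sq β
    rw [e, Real.sin_add, Real.cos_add, Real.sin_two_mul, Real.cos_two_mul]
    congr 2
    · push_cast
      linear_combination (-2 * Complex.sin ((2 * k + 1) * β)) * (by simpa using hcs :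
        Complex.sin β ^ 2 + Complex.cos β ^ 2 = 1)
    · push_cast
      ring
end

section
/- Let N ≥ 2 be a natural number, work in ℂ^N (EuclideanSpace ℂ (Fin N)), fix x₀ ∈ Fin N, let e_{x₀} be the corresponding standard basis vector, and let ψ₀ = (1/√N, …, 1/√N) be the equal superposition of all standard basis vectors. Let β = arcsin(1/√N) and define the Grover iterate Q : ℂ^N → ℂ^N by Q = -(I_{ψ₀} ∘ I_{e_{x₀}}). Then for every natural number k, the amplitude of the marked state after k iterations is ⟪e_{x₀}, Q^k ψ₀⟫ = sin((2k+1)β). -/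
open scoped ComplexInnerProductSpace

theorem grover_amplitude (N : ℕ) (hN : 2 ≤ N) (x₀ : Fin N)
    (ψ₀ : EuclideanSpace ℂ (Fin N))
    (hψ₀ : ∀ i, ψ₀ i = ((1 / Real.sqrt N : ℝ) : ℂ))
    (β : ℝ) (hβ : β = Real.arcsin (1 / Real.sqrt N))
    (Q : EuclideanSpace ℂ (Fin N) → EuclideanSpace ℂ (Fin N))
    (hQ : ∀ v, Q v = -(inversion ψ₀ (inversion (EuclideanSpace.single x₀ (1 : ℂ)) v))) :
    ∀ k : ℕ, ⟪EuclideanSpace.single x₀ (1 : ℂ), Q^[k] ψ₀⟫ =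
      ((Real.sin ((2 * k + 1) * β) : ℝ) : ℂ) := by
  have hN0 : (0 : ℝ) < N := by
    have : 0 < N := by omega
    exact_mod_cast this
  have hs : Real.sin β = 1 / Real.sqrt N := by
    rw [hβ]
    apply Real.sin_arcsin
    · have : 0 ≤ 1 / Real.sqrt N := by positivity
      linarith
    · rw [div_le_one (Real.sqrt_pos.mpr hN0)]
      rw [Real.one_le_sqrt]
      have : 1 ≤ N := by omega
      exact_mod_cast this
  rw [← hs] at hψ₀
  have hee : ⟪EuclideanSpace.single x₀ (1 : ℂ), EuclideanSpace.single x₀ (1 : ℂ)⟫ = 1 := by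
    simp [EuclideanSpace.inner_single_left]
  have hep : ⟪EuclideanSpace.single x₀ (1 : ℂ), ψ₀⟫ = ((Real.sin β : ℝ) : ℂ) := by
    rw [EuclideanSpace.inner_single_left, hψ₀]
    simp
  have hpe : ⟪ψ₀, EuclideanSpace.single x₀ (1 : ℂ)⟫ = ((Real.sin β : ℝ) : ℂ) := by
    rw [EuclideanSpace.inner_single_right, hψ₀, Complex.conj_ofReal, one_mul]
  have hpp : ⟪ψ₀, ψ₀⟫ = 1 := by
    have h1 : (N : ℝ) * (Real.sin β * Real.sin β) = 1 := by
      rw [hs, div_mul_div_comm, Real.mul_self_sqrt hN0.le]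
      field_simp
    rw [PiLp.inner_apply]
    simp only [hψ₀, RCLike.inner_apply, Complex.conj_ofReal, Finset.sum_const,
      Finset.card_univ, Fintype.card_fin, nsmul_eq_mul]
    exact_mod_cast h1
  have key : ∀ k : ℕ, ⟪EuclideanSpace.single x₀ (1 : ℂ), Q^[k] ψ₀⟫ =
      ((Real.sin ((2 * k + 1) * β) : ℝ) : ℂ) ∧
      ⟪ψ₀, Q^[k] ψ₀⟫ = ((Real.cos (2 * k * β) : ℝ) : ℂ) := by
    intro k
    induction k with
    | zero =>
      rw [Function.iterate_zero_apply, hep, hpp]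
      simp
    | succ k ih =>
      obtain ⟨ha, hp⟩ := ih
      have hc : Real.cos (2 * (k + 1 : ℕ) * β) =
          Real.cos (2 * k * β) - 2 * Real.sin ((2 * k + 1) * β) * Real.sin β := by
        have e1 : 2 * ((k + 1 : ℕ) : ℝ) * β = (2 * k + 1) * β + β := by push_cast; ring
        have e2 : 2 * (k : ℝ) * β = (2 * k + 1) * β - β := by ring
        rw [e1, e2, Real.cos_add, Real.cos_sub]
        ring
      have hsn : Real.sin ((2 * (k + 1 : ℕ) + 1) * β) =
          Real.sin ((2 * k + 1) * β) + 2 * Real.sin β * Real.cos (2 * (k + 1 : ℕ) * β) := by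
        have e1 : (2 * ((k + 1 : ℕ) : ℝ) + 1) * β = 2 * ((k + 1 : ℕ) : ℝ) * β + β := by ring
        have e2 : (2 * (k : ℝ) + 1) * β = 2 * ((k + 1 : ℕ) : ℝ) * β - β := by push_cast; ring
        rw [e1, e2, Real.sin_add, Real.sin_sub]
        ring
      rw [hsn, hc, Function.iterate_succ_apply', hQ]
      simp only [inversion, inner_neg_right, inner_sub_right, inner_smul_right,
        hee, hep, hpe, hpp, ha, hp, Complex.ofReal_add, Complex.ofReal_sub,
        Complex.ofReal_mul, Complex.ofReal_ofNat]
      constructor <;> ring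
  exact fun k => (key k).1
end

section
/- Let N ≥ 2 be a natural number, work in ℂ^N, fix x₀ ∈ Fin N with standard basis vector e_{x₀}, let ψ₀ be the equal superposition (1/√N, …, 1/√N), let β = arcsin(1/√N), let Q = -(I_{ψ₀} ∘ I_{e_{x₀}}), and let K be the nearest integer to π/(4β) - 1/2. Then after K Grover iterations the probability of measuring the marked state satisfies ‖⟪e_{x₀}, Q^K ψ₀⟫‖² ≥ 1 - 1/N; equivalently, the probability of error is at most 1/N. -/
open scoped ComplexInnerProductSpace

lemma grover_aux {E : Type*} [NormedAddCommGroup E] [InnerProductSpace ℂ E]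
    (e ψ : E) (β : ℝ) (hc : Real.cos β ≠ 0)
    (hee : ⟪e, e⟫ = 1) (hpp : ⟪ψ, ψ⟫ = 1) (hep : ⟪e, ψ⟫ = ((Real.sin β : ℝ) : ℂ))
    (hpe : ⟪ψ, e⟫ = ((Real.sin β : ℝ) : ℂ)) (Q : E → E)
    (hQ : ∀ v, Q v = -(inversion ψ (inversion e v))) (k : ℕ) :
    Q^[k] ψ = ((Real.sin ((2 * k + 1) * β) - Real.sin β * (Real.cos ((2 * k + 1) * β) / Real.cos β) : ℝ) : ℂ) • e
      + ((Real.cos ((2 * k + 1) * β) / Real.cos β : ℝ) : ℂ) • ψ := by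
  have step : ∀ a b : ℂ, Q (a • e + b • ψ) = (a + 2 * b * (Real.sin β : ℝ)) • e
      + (b - 2 * (Real.sin β : ℝ) * a - 4 * b * (Real.sin β : ℝ) ^ 2) • ψ := by
    intro a b
    rw [hQ]
    simp only [inversion, inner_sub_right, inner_add_right, inner_smul_right, hee, hpp, hep, hpe]
    module
  induction k with
  | zero => simp [hc]
  | succ k ih =>
    rw [Function.iterate_succ_apply', ih, step]
    have h1 : (2 * ((k + 1 : ℕ) : ℝ) + 1) * β = (2 * k + 1) * β + 2 * β := by push_cast; ring
    rw [h1, Real.sin_add, Real.cos_add, Real.sin_two_mul, Real.cos_two_mul]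
    have hs := Real.sin_sq_add_cos_sq β
    generalize Real.sin ((2 * k + 1) * β) = S
    generalize Real.cos ((2 * k + 1) * β) = C
    generalize Real.sin β = s at *
    generalize Real.cos β = c at *
    congr 2
    · norm_cast
      field_simp
      linear_combination (-2 * c * S) * hs
    · norm_cast
      field_simp
      linear_combination (-2 * C) * hs

theorem grover_success_probability (N : ℕ) (hN : 2 ≤ N) (x₀ : Fin N)
    (ψ₀ : EuclideanSpace ℂ (Fin N))
    (hψ₀ : ∀ i, ψ₀ i = ((1 / Real.sqrt N : ℝ) : ℂ))
    (β : ℝ) (hβ : β = Real.arcsin (1 / Real.sqrt N))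
    (Q : EuclideanSpace ℂ (Fin N) → EuclideanSpace ℂ (Fin N))
    (hQ : ∀ v, Q v = -(inversion ψ₀ (inversion (EuclideanSpace.single x₀ (1 : ℂ)) v)))
    (K : ℕ) (hK : (K : ℤ) = round (Real.pi / (4 * β) - 1 / 2)) :
    ‖⟪EuclideanSpace.single x₀ (1 : ℂ), Q^[K] ψ₀⟫‖ ^ 2 ≥ 1 - 1 / N := by
  have hN' : (2 : ℝ) ≤ N := by exact_mod_cast hN
  have hN0 : (0 : ℝ) < N := by linarith
  have hsq : Real.sqrt N ^ 2 = N := Real.sq_sqrt hN0.le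
  have hsp : 0 < Real.sqrt N := Real.sqrt_pos.2 hN0
  have hs1 : 1 < Real.sqrt N := by nlinarith
  have hlt : 1 / Real.sqrt N < 1 := by rw [div_lt_one hsp]; exact hs1
  have hpos : 0 < 1 / Real.sqrt N := by positivity
  have hsin : Real.sin β = 1 / Real.sqrt N := by
    rw [hβ]; exact Real.sin_arcsin (by linarith) hlt.le
  have hsin2 : Real.sin β ^ 2 = 1 / N := by rw [hsin, div_pow, hsq, one_pow]
  have hβ0 : 0 < β := by rw [hβ]; exact Real.arcsin_pos.2 hpos
  have hβ1 : β < Real.pi / 2 := by rw [hβ]; exact Real.arcsin_lt_pi_div_two.2 hlt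
  have hc : Real.cos β ≠ 0 := (Real.cos_pos_of_mem_Ioo ⟨by linarith, hβ1⟩).ne'
  have hee : ⟪EuclideanSpace.single x₀ (1 : ℂ), EuclideanSpace.single x₀ (1 : ℂ)⟫ = 1 := by
    simp
  have hep : ⟪EuclideanSpace.single x₀ (1 : ℂ), ψ₀⟫ = ((Real.sin β : ℝ) : ℂ) := by
    rw [EuclideanSpace.inner_single_left, hψ₀, hsin]; simp
  have hpe : ⟪ψ₀, EuclideanSpace.single x₀ (1 : ℂ)⟫ = ((Real.sin β : ℝ) : ℂ) := by
    rw [EuclideanSpace.inner_single_right, hψ₀, hsin]; simp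
  have hpp : ⟪ψ₀, ψ₀⟫ = 1 := by
    rw [PiLp.inner_apply]
    simp only [hψ₀, RCLike.inner_apply, Complex.conj_ofReal, Finset.sum_const, Finset.card_univ,
      Fintype.card_fin, nsmul_eq_mul]
    norm_cast
    field_simp
    linarith
  rw [grover_aux _ ψ₀ β hc hee hpp hep hpe Q hQ K, inner_add_right, inner_smul_right,
    inner_smul_right, hee, hep]
  have hr := abs_sub_round (Real.pi / (4 * β) - 1 / 2)
  rw [← hK, Int.cast_natCast, abs_le] at hr
  have hm : Real.pi / (4 * β) * (2 * β) = Real.pi / 2 := by field_simp; ring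
  have hd1 : Real.pi / 2 - (2 * K + 1) * β ≤ β := by
    nlinarith [mul_le_mul_of_nonneg_right hr.2 (by linarith : 0 ≤ 2 * β)]
  have hd2 : -β ≤ Real.pi / 2 - (2 * K + 1) * β := by
    nlinarith [mul_le_mul_of_nonneg_right hr.1 (by linarith : 0 ≤ 2 * β)]
  have hcos : Real.cos ((2 * K + 1) * β) ^ 2 ≤ Real.sin β ^ 2 := by
    rw [← Real.sin_pi_div_two_sub]
    apply sq_le_sq'
    · rw [← Real.sin_neg]
      exact Real.sin_le_sin_of_le_of_le_pi_div_two (by linarith) (by linarith) hd2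
    · exact Real.sin_le_sin_of_le_of_le_pi_div_two (by linarith) (by linarith) hd1
  rw [mul_one, ← Complex.ofReal_mul, ← Complex.ofReal_add, Complex.norm_real, Real.norm_eq_abs,
    sq_abs]
  have := Real.sin_sq_add_cos_sq ((2 * K + 1) * β)
  rw [← hsin2]
  ring_nf at this hcos ⊢
  linarith
end

section
/- Let N ≥ 2 be a natural number, let β = arcsin(1/√N), and let K be the nearest integer to π/(4β) - 1/2 (so π/(4β) - 1 ≤ K ≤ π/(4β)). Then cos²((2K+1)β) ≤ 1/N. -/
theorem grover_round_error_bound (N : ℕ) (hN : 2 ≤ N) (β : ℝ)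
    (hβ : β = Real.arcsin (1 / Real.sqrt N))
    (K : ℤ) (hK : K = round (Real.pi / (4 * β) - 1 / 2)) :
    Real.cos ((2 * K + 1) * β) ^ 2 ≤ 1 / N := by
  have hN2 : (2 : ℝ) ≤ N := by exact_mod_cast hN
  have hs1 : 1 ≤ Real.sqrt N := Real.one_le_sqrt.mpr (by linarith)
  have hpos : 0 < 1 / Real.sqrt N := by positivity
  have hle : 1 / Real.sqrt N ≤ 1 := by
    rw [div_le_one (by linarith)]; exact hs1
  have hβ0 : 0 < β := by rw [hβ]; exact Real.arcsin_pos.mpr hpos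
  have hβ2 : β ≤ Real.pi / 2 := by rw [hβ]; exact Real.arcsin_le_pi_div_two _
  have hsin : Real.sin β = 1 / Real.sqrt N := by
    rw [hβ]; exact Real.sin_arcsin (by linarith) hle
  have hr := abs_le.mp (abs_sub_round (Real.pi / (4 * β) - 1 / 2))
  rw [← hK] at hr
  obtain ⟨h1, h2⟩ := hr
  have he : Real.pi / (4 * β) * (2 * β) = Real.pi / 2 := by
    field_simp; norm_num
  have h3 : Real.pi / 2 - (2 * K + 1) * β ≤ β := by
    have := mul_le_mul_of_nonneg_right h2 (by linarith : 0 ≤ 2 * β)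
    linarith
  have h4 : -β ≤ Real.pi / 2 - (2 * K + 1) * β := by
    have := mul_le_mul_of_nonneg_right h1 (by linarith : 0 ≤ 2 * β)
    linarith
  have hsq : (1 : ℝ) / N = Real.sin β ^ 2 := by
    rw [hsin, div_pow, Real.sq_sqrt (by linarith), one_pow]
  rw [hsq, ← Real.sin_pi_div_two_sub]
  have h5 := Real.sin_le_sin_of_le_of_le_pi_div_two (by linarith) hβ2 h3
  have h6 := Real.sin_le_sin_of_le_of_le_pi_div_two (by linarith) (by linarith) h4
  rw [Real.sin_neg] at h6
  exact sq_le_sq' h6 h5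
end

section
/- Let N ≥ 2 be a natural number, let β = arcsin(1/√N), and let K = ⌊π/(4β) - 1/2⌋ be the floor of π/(4β) - 1/2. Then cos²((2K+1)β) ≤ 4/N - 4/N². -/
theorem grover_floor_error_bound (N : ℕ) (hN : 2 ≤ N) (β : ℝ)
    (hβ : β = Real.arcsin (1 / Real.sqrt N))
    (K : ℤ) (hK : K = ⌊Real.pi / (4 * β) - 1 / 2⌋) :
    Real.cos ((2 * K + 1) * β) ^ 2 ≤ 4 / N - 4 / (N : ℝ) ^ 2 := by
  have hN' : (2 : ℝ) ≤ N := by exact_mod_cast hN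
  have hpos : (0 : ℝ) < N := by linarith
  have hs : 0 < Real.sqrt N := Real.sqrt_pos.mpr hpos
  have hs1 : 1 ≤ Real.sqrt N := by
    rw [Real.one_le_sqrt]; linarith
  have hle : 1 / Real.sqrt N ≤ 1 := by
    rw [div_le_one hs]; exact hs1
  have h0 : 0 < 1 / Real.sqrt N := by positivity
  have hsin : Real.sin β = 1 / Real.sqrt N := by
    rw [hβ]; exact Real.sin_arcsin (by linarith) hle
  have hsin2 : Real.sin β ^ 2 = 1 / N := by
    rw [hsin, div_pow, Real.sq_sqrt hpos.le, one_pow]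
  have hβ0 : 0 < β := by rw [hβ]; exact Real.arcsin_pos.mpr h0
  have hβ1 : β ≤ Real.pi / 2 := by rw [hβ]; exact Real.arcsin_le_pi_div_two _
  have hpi := Real.pi_pos
  have hcos2 : Real.cos β ^ 2 = 1 - 1 / N := by
    rw [Real.cos_sq', hsin2]
  have hinv : 1 / (N : ℝ) ≤ 1 / 2 := one_div_le_one_div_of_le (by norm_num) hN'
  have h2β : 2 * β ≤ Real.pi / 2 := by
    by_contra! h
    have h1 := Real.cos_neg_of_pi_div_two_lt_of_lt h (by linarith)
    rw [Real.cos_two_mul, hcos2] at h1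
    linarith
  have hrhs : 4 / N - 4 / (N : ℝ) ^ 2 = Real.sin (2 * β) ^ 2 := by
    rw [Real.sin_two_mul, mul_pow, mul_pow, hsin2, hcos2]
    field_simp
    try ring
  have hx : Real.pi / (4 * β) * β = Real.pi / 4 := by field_simp
  have hK1 : (K : ℝ) ≤ Real.pi / (4 * β) - 1 / 2 := by
    rw [hK]; exact Int.floor_le _
  have hK2 : Real.pi / (4 * β) - 1 / 2 < K + 1 := by
    rw [hK]; exact Int.lt_floor_add_one _
  have a1 := mul_le_mul_of_nonneg_right hK1 hβ0.le
  have a2 := mul_lt_mul_of_pos_right hK2 hβ0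
  rw [sub_mul, hx] at a1 a2
  rw [hrhs, ← Real.sin_pi_div_two_sub]
  apply pow_le_pow_left₀
  · apply Real.sin_nonneg_of_nonneg_of_le_pi <;> linarith
  · apply Real.sin_le_sin_of_le_of_le_pi_div_two <;> linarith
end

section
/- Let E be an inner product space over ℂ, let x₀ ∈ E be a unit vector, let β ∈ (0, π/2) be real, let ψ₀ be a unit vector with ⟪x₀, ψ₀⟫ = sin β, set x₀⊥ = (1/cos β) • (ψ₀ - (sin β) • x₀), and let ψ₀⊥ = (cos β) • x₀ - (sin β) • x₀⊥ (a unit vector in the real span of x₀ and x₀⊥ orthogonal to ψ₀). Then for every vector v in the real span S_ℝ = {a • x₀ + b • x₀⊥ : a, b ∈ ℝ}, one has -(I_{ψ₀} (I_{x₀} v)) = I_{ψ₀⊥} (I_{x₀} v); that is, the Grover iterate Q = -I_{ψ₀} I_{x₀} restricted to the plane S_ℝ coincides with the composition of the two inversions I_{ψ₀⊥} ∘ I_{x₀}. -/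
open scoped ComplexInnerProductSpace

theorem grover_iterate_eq_two_inversions {E : Type*} [NormedAddCommGroup E]
    [InnerProductSpace ℂ E] (x₀ ψ₀ x₀perp ψ₀perp : E) (β : ℝ)
    (hx₀ : ‖x₀‖ = 1) (hψ₀ : ‖ψ₀‖ = 1)
    (hβ : β ∈ Set.Ioo 0 (Real.pi / 2))
    (hinner : ⟪x₀, ψ₀⟫ = (Real.sin β : ℂ))
    (hx₀perp : x₀perp = ((1 / Real.cos β : ℝ) : ℂ) • (ψ₀ - ((Real.sin β : ℝ) : ℂ) • x₀))
    (hψ₀perp : ψ₀perp = ((Real.cos β : ℝ) : ℂ) • x₀ - ((Real.sin β : ℝ) : ℂ) • x₀perp) :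
    ∀ v ∈ {w : E | ∃ a b : ℝ, w = (a : ℂ) • x₀ + (b : ℂ) • x₀perp},
      -(inversion ψ₀ (inversion x₀ v)) = inversion ψ₀perp (inversion x₀ v) := by
  rintro v ⟨a, b, rfl⟩
  have hc : Real.cos β ≠ 0 :=
    (Real.cos_pos_of_mem_Ioo ⟨by linarith [hβ.1, Real.pi_pos], hβ.2⟩).ne'
  have hsc : ((Real.sin β : ℝ) : ℂ) ^ 2 + ((Real.cos β : ℝ) : ℂ) ^ 2 = 1 := by
    exact_mod_cast Real.sin_sq_add_cos_sq β
  generalize Real.sin β = s at *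
  generalize Real.cos β = c at *
  have hc' : (c : ℂ) ≠ 0 := by exact_mod_cast hc
  have hxx : ⟪x₀, x₀⟫ = (1 : ℂ) := by
    rw [inner_self_eq_norm_sq_to_K, hx₀]; simp
  have hpp : ⟪ψ₀, ψ₀⟫ = (1 : ℂ) := by
    rw [inner_self_eq_norm_sq_to_K, hψ₀]; simp
  have hψ : ψ₀ = (s : ℂ) • x₀ + (c : ℂ) • x₀perp := by
    rw [hx₀perp, smul_smul]
    have : (c : ℂ) * ((1 / c : ℝ) : ℂ) = 1 := by
      push_cast; field_simp
    rw [this]; module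
  have hxp : ⟪x₀, x₀perp⟫ = (0 : ℂ) := by
    rw [hx₀perp, inner_smul_right, inner_sub_right, inner_smul_right, hinner, hxx]; simp
  have hpx : ⟪x₀perp, x₀⟫ = (0 : ℂ) := by
    rw [← inner_conj_symm, hxp]; simp
  have hqq : ⟪x₀perp, x₀perp⟫ = (1 : ℂ) := by
    rw [hψ] at hpp
    simp only [inner_add_left, inner_add_right, inner_smul_left, inner_smul_right, hxx, hxp, hpx,
      Complex.conj_ofReal] at hpp
    have : (c : ℂ) ^ 2 * ⟪x₀perp, x₀perp⟫ = (c : ℂ) ^ 2 * 1 := by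
      linear_combination hpp - hsc
    exact mul_left_cancel₀ (pow_ne_zero 2 hc') this
  clear hx₀perp hinner hpp hψ₀
  subst hψ hψ₀perp
  simp only [inversion, inner_add_left, inner_add_right, inner_sub_left, inner_sub_right,
    inner_smul_left, inner_smul_right, hxx, hxp, hpx, hqq, Complex.conj_ofReal]
  match_scalars
  · linear_combination (-2 * a : ℂ) * hsc
  · linear_combination (2 * b : ℂ) * hsc
end
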